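/- arXiv:1102.1324 — 3 statements merged into one kernel-verified Lean document; each statement's English description precedes it below -/
import Mathlib

section
/- Let L(x,y) = ∫_{ℝᵈ} e^{i(x−y)·t} dγ(t) be a continuous translation-invariant 𝓛(Λ)-valued reproducing kernel on ℝᵈ, where γ is an 𝓛₊(Λ)-valued Borel measure of bounded variation, and let γ = γ_c + γ_s be its Lebesgue decomposition with respect to Lebesgue measure, giving L = L_c + L_s. Then H_{L_c} ∩ H_{L_s} = {0}, and consequently H_L is the orthogonal direct sum H_{L_c} ⊕ H_{L_s}. -/
open MeasureTheory ContinuousLinearMap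
open scoped ComplexOrder

noncomputable section

local notation "⟪" x ", " y "⟫" => @inner ℂ _ _ x y

section Defs

variable {X : Type*} {Λ : Type*} [NormedAddCommGroup Λ] [InnerProductSpace ℂ Λ]

/-- Data exhibiting a Hilbert space `H`, embedded in the `Λ`-valued functions on `X` by `J`,
as the reproducing kernel Hilbert space of the operator-valued kernel `K`;
`kf x ξ` is the element representing `K(x,·)ξ`. -/
structure IsVRKHS (K : X → X → Λ →L[ℂ] Λ) (H : Type*) [NormedAddCommGroup H]
    [InnerProductSpace ℂ H] (J : H →ₗ[ℂ] (X → Λ)) (kf : X → Λ → H) : Prop where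
  inj : Function.Injective J
  kfun_eq : ∀ (x : X) (ξ : Λ), J (kf x ξ) = fun y => K x y ξ
  repro : ∀ (f : H) (x : X) (ξ : Λ), ⟪kf x ξ, f⟫ = ⟪ξ, J f x⟫

/-- Data exhibiting `H` as the RKHS of a scalar-valued kernel `k` on `Y`. -/
structure IsSRKHS {Y : Type*} (k : Y → Y → ℂ) (H : Type*) [NormedAddCommGroup H]
    [InnerProductSpace ℂ H] (J : H →ₗ[ℂ] (Y → ℂ)) (kf : Y → H) : Prop where
  inj : Function.Injective J
  kfun_eq : ∀ y : Y, J (kf y) = fun z => k y z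
  repro : ∀ (f : H) (y : Y), ⟪kf y, f⟫ = J f y

/-- `H₁ ⪯ H₂` : every element of `H₁` is an element of `H₂` (as functions) with the same norm. -/
def RKHSle {H₁ H₂ V : Type*} [NormedAddCommGroup H₁] [InnerProductSpace ℂ H₁]
    [NormedAddCommGroup H₂] [InnerProductSpace ℂ H₂] [AddCommGroup V] [Module ℂ V]
    (J₁ : H₁ →ₗ[ℂ] V) (J₂ : H₂ →ₗ[ℂ] V) : Prop :=
  ∀ f : H₁, ∃ g : H₂, J₂ g = J₁ f ∧ ‖g‖ = ‖f‖

/-- `K` is an `𝓛(Λ)`-valued reproducing kernel: hermitian and positive-definite. -/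
def IsOpKernel [CompleteSpace Λ] (K : X → X → Λ →L[ℂ] Λ) : Prop :=
  (∀ x y, K x y = ContinuousLinearMap.adjoint (K y x)) ∧
    ∀ (n : ℕ) (x : Fin n → X) (ξ : Fin n → Λ),
      0 ≤ ∑ j, ∑ k, ⟪ξ k, K (x j) (x k) (ξ j)⟫

/-- `k` is a scalar-valued reproducing kernel: hermitian and positive-definite. -/
def IsScalarKernel {Y : Type*} (k : Y → Y → ℂ) : Prop :=
  (∀ y z, k z y = starRingEnd ℂ (k y z)) ∧
    ∀ (n : ℕ) (y : Fin n → Y) (c : Fin n → ℂ),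
      0 ≤ ∑ j, ∑ l, starRingEnd ℂ (c l) * c j * k (y j) (y l)

/-- The relation `A ⪯ B` for positive operators. -/
def OpPrec (A B : Λ →L[ℂ] Λ) : Prop :=
  ∀ ξ : Λ, ∃ η : Λ, A ξ = B η ∧ ⟪ξ, A ξ⟫ = ⟪η, B η⟫

end Defs

/-- Two families with the same Gram matrix: transfer of the represented functionals. -/
theorem gram_transfer {ι H H' : Type*} [NormedAddCommGroup H] [InnerProductSpace ℂ H]
    [NormedAddCommGroup H'] [InnerProductSpace ℂ H'] [CompleteSpace H']
    (u : ι → H) (v : ι → H') (huv : ∀ i j, ⟪u i, u j⟫ = ⟪v i, v j⟫) (f : H) :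
    ∃ g : H', (∀ i, ⟪v i, g⟫ = ⟪u i, f⟫) ∧ ‖g‖ ≤ ‖f‖ := by
  let A : (ι →₀ ℂ) →ₗ[ℂ] H := Finsupp.linearCombination ℂ u
  let B : (ι →₀ ℂ) →ₗ[ℂ] H' := Finsupp.linearCombination ℂ v
  have hn : ∀ c, ‖A c‖ = ‖B c‖ := by
    intro c
    have h1 : ⟪A c, A c⟫ = ⟪B c, B c⟫ := by
      simp only [A, B, Finsupp.linearCombination_apply,
        Finsupp.sum, sum_inner, inner_sum, inner_smul_left, inner_smul_right, huv]
    rw [inner_self_eq_norm_sq_to_K, inner_self_eq_norm_sq_to_K] at h1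
    have h2 : ‖A c‖ ^ 2 = ‖B c‖ ^ 2 := by exact_mod_cast h1
    exact (sq_eq_sq₀ (norm_nonneg _) (norm_nonneg _)).1 h2
  obtain ⟨g, hg⟩ := LinearMap.exists_rightInverse_of_surjective B.rangeRestrict
    B.range_rangeRestrict
  have hBg : ∀ w, B (g w) = (w : H') := fun w => by
    have := LinearMap.congr_fun hg w
    exact congrArg Subtype.val this
  have hAg : ∀ c, A (g (B.rangeRestrict c)) = A c := by
    intro c
    rw [← sub_eq_zero, ← map_sub, ← norm_eq_zero, hn, norm_eq_zero, map_sub, hBg, sub_eq_zero]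
    rfl
  let l : StrongDual ℂ (LinearMap.range B) :=
    LinearMap.mkContinuous ((innerSL ℂ f : H →L[ℂ] ℂ).toLinearMap ∘ₗ A ∘ₗ g) ‖f‖ (by
      intro w
      have h1 : ‖⟪f, A (g w)⟫‖ ≤ ‖f‖ * ‖A (g w)‖ := norm_inner_le_norm _ _
      rw [hn, hBg] at h1
      simpa using h1)
  obtain ⟨L, hL, hLn⟩ := exists_extension_norm_eq (LinearMap.range B) l
  refine ⟨(InnerProductSpace.toDual ℂ H').symm L, ?_, ?_⟩
  · intro i
    rw [← inner_conj_symm, InnerProductSpace.toDual_symm_apply, ← inner_conj_symm (u i)]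
    congr 1
    have h1 := hL (B.rangeRestrict (Finsupp.single i 1))
    have h2 : ((B.rangeRestrict (Finsupp.single i 1) : LinearMap.range B) : H') = v i := by
      simp [B]
    rw [h2] at h1
    rw [h1]
    change ⟪f, A (g _)⟫ = _
    rw [hAg]
    simp [A]
  · rw [LinearIsometryEquiv.norm_map, hLn]
    exact LinearMap.mkContinuous_norm_le _ (norm_nonneg _) _

section Fourier

variable {E : Type*} [NormedAddCommGroup E] [InnerProductSpace ℝ E] [MeasurableSpace E]
  [BorelSpace E] [CompleteSpace E] [SecondCountableTopology E]

/-- The character of frequency `x`. -/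
def fch (x t : E) : ℂ := Complex.exp (Complex.I * ((@inner ℝ _ _ x t : ℝ) : ℂ))

theorem fch_cont (x : E) : Continuous (fch x) := by unfold fch; fun_prop

theorem fch_norm (x t : E) : ‖fch x t‖ = 1 := by
  unfold fch; rw [mul_comm]; exact Complex.norm_exp_ofReal_mul_I _

theorem fch_conj (x t : E) : starRingEnd ℂ (fch x t) = fch (-x) t := by
  unfold fch; rw [← Complex.exp_conj]; simp

theorem fch_add (x y t : E) : fch (x + y) t = fch x t * fch y t := by
  unfold fch; rw [← Complex.exp_add, inner_add_left]; push_cast; ring_nf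

theorem fch_int (x : E) {μ : Measure E} {θ : E → ℂ} (h : Integrable θ μ) :
    Integrable (fun t => fch x t * θ t) μ :=
  h.bdd_mul (c := 1) (fch_cont x).aestronglyMeasurable (ae_of_all _ fun t => (fch_norm x t).le)

theorem fourier_real {μ : Measure E} [IsFiniteMeasure μ] {h : E → ℝ} (hh : Integrable h μ)
    (h0 : ∀ x, ∫ t, fch x t * (h t : ℂ) ∂μ = 0) : h =ᵐ[μ] 0 := by
  have hfp := isFiniteMeasure_withDensity_ofReal hh.2
  have hfm := isFiniteMeasure_withDensity_ofReal hh.neg.2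
  have hmp : AEMeasurable (fun t => ENNReal.ofReal (h t)) μ := hh.1.aemeasurable.ennreal_ofReal
  have hmm : AEMeasurable (fun t => ENNReal.ofReal ((-h) t)) μ :=
    hh.neg.1.aemeasurable.ennreal_ofReal
  have key : μ.withDensity (fun t => ENNReal.ofReal (h t))
      = μ.withDensity (fun t => ENNReal.ofReal ((-h) t)) := by
    apply Measure.ext_of_charFun
    ext x
    have e1 : ∀ t : E, Complex.exp (((@inner ℝ _ _ t x : ℝ) : ℂ) * Complex.I) = fch x t := by
      intro t; unfold fch; rw [mul_comm, real_inner_comm]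
    simp only [charFun_apply, e1]
    rw [integral_withDensity_eq_integral_toReal_smul₀ hmp (by simp),
      integral_withDensity_eq_integral_toReal_smul₀ hmm (by simp), ← sub_eq_zero,
      ← integral_sub, ← h0 x]
    · congr 1
      ext t
      rw [← sub_smul, ENNReal.toReal_ofReal', ENNReal.toReal_ofReal', Pi.neg_apply,
        Complex.real_smul, mul_comm, max_zero_sub_max_neg_zero_eq_self]
    · have := fch_int x (hh.pos_part.ofReal (𝕜 := ℂ))
      refine this.congr (ae_of_all _ fun t => ?_)
      simp only [ENNReal.toReal_ofReal', Complex.real_smul]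
      rw [mul_comm]; rfl
    · have := fch_int x (hh.neg_part.ofReal (𝕜 := ℂ))
      refine this.congr (ae_of_all _ fun t => ?_)
      simp only [ENNReal.toReal_ofReal', Complex.real_smul]
      rw [mul_comm]; rfl
  rw [withDensity_eq_iff_of_sigmaFinite hmp hmm] at key
  filter_upwards [key] with t ht
  have h2 := congrArg ENNReal.toReal ht
  rw [ENNReal.toReal_ofReal', ENNReal.toReal_ofReal'] at h2
  have h3 := max_zero_sub_max_neg_zero_eq_self (h t)
  simp only [Pi.neg_apply] at h2
  simp only [Pi.zero_apply]
  linarith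

theorem fourier_complex {μ : Measure E} [IsFiniteMeasure μ] {θ : E → ℂ} (hh : Integrable θ μ)
    (h0 : ∀ x, ∫ t, fch x t * θ t ∂μ = 0) : θ =ᵐ[μ] 0 := by
  have hc : Integrable (fun t => starRingEnd ℂ (θ t)) μ :=
    (Complex.conjLIE.toContinuousLinearEquiv.toContinuousLinearMap).integrable_comp hh
  have h1 : ∀ x, ∫ t, fch x t * starRingEnd ℂ (θ t) ∂μ = 0 := by
    intro x
    have := congrArg (starRingEnd ℂ) (h0 (-x))
    rw [← integral_conj] at this
    simpa [fch_conj] using this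
  have hre : (fun t => (θ t).re) =ᵐ[μ] 0 := by
    apply fourier_real hh.re
    intro x
    have : ∀ t, fch x t * ((θ t).re : ℂ)
        = (2⁻¹ : ℂ) * (fch x t * θ t + fch x t * starRingEnd ℂ (θ t)) := by
      intro t; rw [Complex.re_eq_add_conj]; ring
    refine (integral_congr_ae (ae_of_all _ this)).trans ?_
    rw [integral_const_mul, integral_add (fch_int x hh) (fch_int x hc), h0, h1]; simp
  have him : (fun t => (θ t).im) =ᵐ[μ] 0 := by
    apply fourier_real hh.im
    intro x
    have : ∀ t, fch x t * ((θ t).im : ℂ)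
        = (2 * Complex.I)⁻¹ * (fch x t * θ t - fch x t * starRingEnd ℂ (θ t)) := by
      intro t; rw [Complex.im_eq_sub_conj]; ring
    refine (integral_congr_ae (ae_of_all _ this)).trans ?_
    rw [integral_const_mul, integral_sub (fch_int x hh) (fch_int x hc), h0, h1]; simp
  filter_upwards [hre, him] with t h1 h2
  exact Complex.ext h1 h2

theorem fourier_singular {μ ν : Measure E} [IsFiniteMeasure μ] [IsFiniteMeasure ν]
    (hs : μ.MutuallySingular ν) {φ ψ : E → ℂ} (hφ : Integrable φ μ) (hψ : Integrable ψ ν)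
    (h : ∀ x, ∫ t, fch x t * φ t ∂μ = ∫ t, fch x t * ψ t ∂ν) (x : E) :
    ∫ t, fch x t * φ t ∂μ = 0 := by
  obtain ⟨S, hS, hμ, hν⟩ := hs
  classical
  let θ : E → ℂ := S.piecewise (fun t => - ψ t) φ
  have aμ : ∀ᵐ t ∂μ, θ t = φ t := by
    have : ∀ᵐ t ∂μ, t ∉ S := measure_eq_zero_iff_ae_notMem.1 hμ
    filter_upwards [this] with t ht
    simp [θ, ht]
  have aν : ∀ᵐ t ∂ν, θ t = - ψ t := by
    have : ∀ᵐ t ∂ν, t ∉ Sᶜ := measure_eq_zero_iff_ae_notMem.1 hν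
    filter_upwards [this] with t ht
    have ht : t ∈ S := by simpa using ht
    simp [θ, ht]
  have iμ : Integrable θ μ := hφ.congr (by filter_upwards [aμ] with t ht using ht.symm)
  have iν : Integrable θ ν := hψ.neg.congr (by filter_upwards [aν] with t ht using ht.symm)
  have hθ : θ =ᵐ[μ + ν] 0 := by
    apply fourier_complex (iμ.add_measure iν)
    intro x
    rw [integral_add_measure (fch_int x iμ) (fch_int x iν)]
    have e1 : ∫ t, fch x t * θ t ∂μ = ∫ t, fch x t * φ t ∂μ :=
      integral_congr_ae (by filter_upwards [aμ] with t ht; rw [ht])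
    have e2 : ∫ t, fch x t * θ t ∂ν = ∫ t, - (fch x t * ψ t) ∂ν :=
      integral_congr_ae (by filter_upwards [aν] with t ht; rw [ht]; ring)
    rw [e1, e2, integral_neg, h]; ring
  have hθμ : ∀ᵐ t ∂μ, θ t = 0 := (ae_add_measure_iff.1 hθ).1
  apply integral_eq_zero_of_ae
  filter_upwards [aμ, hθμ] with t h1 h2
  simp [← h1, h2]

/-- Representation of a functional by an integrable density. -/
theorem repr_density {H : Type*} [NormedAddCommGroup H] [InnerProductSpace ℂ H]
    (μ : Measure E) [IsFiniteMeasure μ] (u : E → H)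
    (hu : ∀ x y, ⟪u y, u x⟫ = ∫ t, fch (x - y) t ∂μ) (f : H) :
    ∃ φ : E → ℂ, Integrable φ μ ∧ ∀ x, ⟪u x, f⟫ = ∫ t, fch (-x) t * φ t ∂μ := by
  have hm : ∀ x, MemLp (fch x) 2 μ := fun x =>
    MemLp.of_bound (fch_cont x).aestronglyMeasurable 1 (ae_of_all _ fun t => (fch_norm x t).le)
  let v : E → Lp ℂ 2 μ := fun x => (hm x).toLp _
  have huv : ∀ i j, ⟪u i, u j⟫ = ⟪v i, v j⟫ := by
    intro i j
    rw [hu, L2.inner_def]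
    apply integral_congr_ae
    filter_upwards [(hm i).coeFn_toLp, (hm j).coeFn_toLp] with t h1 h2
    simp only [v]
    rw [h1, h2, RCLike.inner_apply, fch_conj, sub_eq_add_neg, fch_add]
  obtain ⟨g, hg, -⟩ := gram_transfer u v huv f
  refine ⟨g, (Lp.memLp g).integrable (by norm_num), fun x => ?_⟩
  rw [← hg, L2.inner_def]
  apply integral_congr_ae
  filter_upwards [(hm x).coeFn_toLp] with t h1
  simp only [v]
  rw [h1, RCLike.inner_apply, fch_conj, mul_comm]

end Fourier

/-- For a translation-invariant kernel L = L_c + L_s coming from the Lebesgue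
decomposition γ = γ_c + γ_s of an operator-valued Borel measure (encoded weakly by the
diagonal measures Qc ξ ≪ Lebesgue and Qs ξ ⟂ Lebesgue, with L_a given by Fourier integrals of
these), one has H_{L_c} ∩ H_{L_s} = {0} and H_L is the orthogonal direct sum
H_{L_c} ⊕ H_{L_s}. -/
theorem stmt14 {Λ : Type*} [NormedAddCommGroup Λ] [InnerProductSpace ℂ Λ] [CompleteSpace Λ]
    (d : ℕ)
    (Qc Qs : Λ → Measure (EuclideanSpace ℝ (Fin d)))
    (hQcfin : ∀ ξ, IsFiniteMeasure (Qc ξ)) (hQsfin : ∀ ξ, IsFiniteMeasure (Qs ξ))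
    (hQcac : ∀ ξ, Qc ξ ≪ volume) (hQssing : ∀ ξ, (Qs ξ).MutuallySingular volume)
    (Lc Ls L : EuclideanSpace ℝ (Fin d) → EuclideanSpace ℝ (Fin d) → Λ →L[ℂ] Λ)
    (hLc : ∀ x y ξ, ⟪ξ, Lc x y ξ⟫ =
      ∫ t, Complex.exp (Complex.I * ((@inner ℝ _ _ (x - y) t : ℝ) : ℂ)) ∂(Qc ξ))
    (hLs : ∀ x y ξ, ⟪ξ, Ls x y ξ⟫ =
      ∫ t, Complex.exp (Complex.I * ((@inner ℝ _ _ (x - y) t : ℝ) : ℂ)) ∂(Qs ξ))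
    (hL : ∀ x y, L x y = Lc x y + Ls x y)
    {Hc : Type*} [NormedAddCommGroup Hc] [InnerProductSpace ℂ Hc] [CompleteSpace Hc]
    (Jc : Hc →ₗ[ℂ] (EuclideanSpace ℝ (Fin d) → Λ)) (kfc : EuclideanSpace ℝ (Fin d) → Λ → Hc)
    (hHc : IsVRKHS Lc Hc Jc kfc)
    {Hs : Type*} [NormedAddCommGroup Hs] [InnerProductSpace ℂ Hs] [CompleteSpace Hs]
    (Js : Hs →ₗ[ℂ] (EuclideanSpace ℝ (Fin d) → Λ)) (kfs : EuclideanSpace ℝ (Fin d) → Λ → Hs)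
    (hHs : IsVRKHS Ls Hs Js kfs)
    {H : Type*} [NormedAddCommGroup H] [InnerProductSpace ℂ H] [CompleteSpace H]
    (J : H →ₗ[ℂ] (EuclideanSpace ℝ (Fin d) → Λ)) (kf : EuclideanSpace ℝ (Fin d) → Λ → H)
    (hH : IsVRKHS L H J kf) :
    Set.range ⇑Jc ∩ Set.range ⇑Js = {0} ∧
      RKHSle Jc J ∧ RKHSle Js J ∧
      ∀ h : H, ∃ (fc : Hc) (fs : Hs),
        J h = Jc fc + Js fs ∧ ‖h‖ ^ 2 = ‖fc‖ ^ 2 + ‖fs‖ ^ 2 := by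
  have gc : ∀ x y ξ η, ⟪kfc y η, kfc x ξ⟫ = ⟪η, Lc x y ξ⟫ := fun x y ξ η => by
    rw [hHc.repro, hHc.kfun_eq]
  have gs : ∀ x y ξ η, ⟪kfs y η, kfs x ξ⟫ = ⟪η, Ls x y ξ⟫ := fun x y ξ η => by
    rw [hHs.repro, hHs.kfun_eq]
  have gl : ∀ x y ξ η, ⟪kf y η, kf x ξ⟫ = ⟪η, L x y ξ⟫ := fun x y ξ η => by
    rw [hH.repro, hH.kfun_eq]
  -- trivial intersection
  have triv : ∀ (a : Hc) (b : Hs), Jc a = Js b → Jc a = 0 := by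
    intro a b hab
    ext1 x
    refine ext_inner_left ℂ fun ξ => ?_
    have := hQcfin ξ
    have := hQsfin ξ
    have hms : (Qc ξ).MutuallySingular (Qs ξ) := ((hQssing ξ).mono_ac .rfl (hQcac ξ)).symm
    obtain ⟨φ, hφ, hφ'⟩ := repr_density (Qc ξ) (fun x => kfc x ξ)
      (fun x y => by rw [gc, hLc]; rfl) a
    obtain ⟨ψ, hψ, hψ'⟩ := repr_density (Qs ξ) (fun x => kfs x ξ)
      (fun x y => by rw [gs, hLs]; rfl) b
    have := fourier_singular hms hφ hψ (fun x => by
      have h1 := hφ' (-x)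
      have h2 := hψ' (-x)
      rw [neg_neg] at h1 h2
      rw [← h1, ← h2, hHc.repro, hHs.repro, hab]) (-x)
    rw [← hφ', hHc.repro] at this
    simpa using this
  -- the direct sum
  let u : EuclideanSpace ℝ (Fin d) × Λ → H := fun p => kf p.1 p.2
  let w : EuclideanSpace ℝ (Fin d) × Λ → WithLp 2 (Hc × Hs) :=
    fun p => WithLp.toLp 2 (kfc p.1 p.2, kfs p.1 p.2)
  have huw : ∀ i j, ⟪u i, u j⟫ = ⟪w i, w j⟫ := by
    intro i j
    simp only [u, w, WithLp.prod_inner_apply, gc, gs, gl, hL, _root_.add_apply,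
      inner_add_right]
  have hw : ∀ i (p : WithLp 2 (Hc × Hs)), ⟪w i, p⟫ = ⟪i.2, (Jc p.fst + Js p.snd) i.1⟫ := by
    intro i p
    simp only [w, WithLp.prod_inner_apply, Pi.add_apply, inner_add_right]
    rw [← hHc.repro, ← hHs.repro]
    rfl
  have hu : ∀ i h, ⟪u i, h⟫ = ⟪i.2, J h i.1⟫ := fun i h => hH.repro _ _ _
  have hJ : ∀ h (p : WithLp 2 (Hc × Hs)), (∀ i, ⟪w i, p⟫ = ⟪u i, h⟫) →
      J h = Jc p.fst + Js p.snd := by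
    intro h p hi
    ext1 x
    refine ext_inner_left ℂ fun ξ => ?_
    have := hi (x, ξ)
    rw [hw, hu] at this
    exact this.symm
  have uinj : ∀ h h', (∀ i, ⟪u i, h⟫ = ⟪u i, h'⟫) → h = h' := by
    intro h h' hi
    apply hH.inj
    ext1 x
    refine ext_inner_left ℂ fun ξ => ?_
    have := hi (x, ξ)
    rwa [hu, hu] at this
  have winj : ∀ p q : WithLp 2 (Hc × Hs), (∀ i, ⟪w i, p⟫ = ⟪w i, q⟫) → p = q := by
    intro p q hi
    have h0 : Jc (p - q).fst + Js (p - q).snd = 0 := by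
      ext1 x
      refine ext_inner_left ℂ fun ξ => ?_
      have := hi (x, ξ)
      rw [← sub_eq_zero, ← inner_sub_right, hw] at this
      rw [Pi.zero_apply, inner_zero_right]
      exact this
    have h1 : Jc (p - q).fst = 0 := triv _ (-(p - q).snd) (by
      rw [map_neg]; exact eq_neg_of_add_eq_zero_left h0)
    have h2 : Js (p - q).snd = 0 := by rwa [h1, zero_add] at h0
    have h3 : (p - q).fst = 0 := hHc.inj (by rw [h1, map_zero])
    have h4 : (p - q).snd = 0 := hHs.inj (by rw [h2, map_zero])
    rw [← sub_eq_zero, ← norm_eq_zero, ← sq_eq_zero_iff, WithLp.prod_norm_sq_eq_of_L2, h3, h4]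
    simp
  have fwd : ∀ h : H, ∃ p : WithLp 2 (Hc × Hs), J h = Jc p.fst + Js p.snd ∧ ‖h‖ = ‖p‖ := by
    intro h
    obtain ⟨p, hp, hpn⟩ := gram_transfer u w huw h
    obtain ⟨h', hp', hpn'⟩ := gram_transfer w u (fun i j => (huw i j).symm) p
    have : h' = h := uinj _ _ fun i => by rw [hp', hp]
    subst this
    exact ⟨p, hJ _ _ hp, le_antisymm hpn' hpn⟩
  have bwd : ∀ p : WithLp 2 (Hc × Hs), ∃ h : H, J h = Jc p.fst + Js p.snd ∧ ‖h‖ = ‖p‖ := by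
    intro p
    obtain ⟨h, hp, hpn⟩ := gram_transfer w u (fun i j => (huw i j).symm) p
    obtain ⟨p', hp', hpn'⟩ := gram_transfer u w huw h
    have : p' = p := winj _ _ fun i => by rw [hp', hp]
    subst this
    exact ⟨h, hJ _ _ hp', le_antisymm hpn hpn'⟩
  refine ⟨?_, ?_, ?_, ?_⟩
  · ext f
    constructor
    · rintro ⟨⟨a, rfl⟩, ⟨b, hb⟩⟩
      exact triv a b hb.symm
    · rintro rfl
      exact ⟨⟨0, map_zero _⟩, ⟨0, map_zero _⟩⟩
  · intro f
    obtain ⟨h, h1, h2⟩ := bwd (WithLp.toLp 2 (f, 0))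
    refine ⟨h, by simpa using h1, ?_⟩
    rw [h2, WithLp.prod_norm_eq_of_L2]; simp
  · intro f
    obtain ⟨h, h1, h2⟩ := bwd (WithLp.toLp 2 (0, f))
    refine ⟨h, by simpa using h1, ?_⟩
    rw [h2, WithLp.prod_norm_eq_of_L2]; simp
  · intro h
    obtain ⟨p, h1, h2⟩ := fwd h
    exact ⟨p.fst, p.snd, h1, by rw [h2, WithLp.prod_norm_sq_eq_of_L2]⟩
end
end

section
/- Let K(x,y) = ∫ e^{i(x−y)·t} dμ(t) and G(x,y) = ∫ e^{i(x−y)·t} dν(t) be continuous translation-invariant 𝓛(Λ)-valued kernels on ℝᵈ, with Lebesgue decompositions μ = μ_c + μ_s, ν = ν_c + ν_s and corresponding kernel decompositions K = K_c + K_s, G = G_c + G_s. Then H_K ⪯ H_G if and only if H_{K_c} ⪯ H_{G_c} and H_{K_s} ⪯ H_{G_s}. -/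
open MeasureTheory ContinuousLinearMap
open scoped ComplexOrder

noncomputable section

local notation "⟪" x ", " y "⟫" => @inner ℂ _ _ x y

section Helpers

/-- Families with equal Gram matrices have equal norms of linear combinations. -/
theorem aux_gram {ι H₁ H₂ : Type*} [NormedAddCommGroup H₁] [InnerProductSpace ℂ H₁]
    [NormedAddCommGroup H₂] [InnerProductSpace ℂ H₂] (v : ι → H₁) (w : ι → H₂)
    (h : ∀ i j, ⟪v i, v j⟫ = ⟪w i, w j⟫) (c : ι →₀ ℂ) :
    ‖Finsupp.linearCombination ℂ v c‖ = ‖Finsupp.linearCombination ℂ w c‖ := by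
  have : ⟪Finsupp.linearCombination ℂ v c, Finsupp.linearCombination ℂ v c⟫ =
      ⟪Finsupp.linearCombination ℂ w c, Finsupp.linearCombination ℂ w c⟫ := by
    simp only [Finsupp.linearCombination_apply, Finsupp.sum, sum_inner, inner_sum,
      inner_smul_left, inner_smul_right, h]
  rw [inner_self_eq_norm_sq_to_K, inner_self_eq_norm_sq_to_K] at this
  have h2 : ‖Finsupp.linearCombination ℂ v c‖ ^ 2 = ‖Finsupp.linearCombination ℂ w c‖ ^ 2 := by
    exact_mod_cast this
  exact (sq_eq_sq₀ (norm_nonneg _) (norm_nonneg _)).1 h2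

theorem aux_gram_inner {X Λ : Type*} [NormedAddCommGroup Λ] [InnerProductSpace ℂ Λ]
    {K : X → X → Λ →L[ℂ] Λ} {H : Type*} [NormedAddCommGroup H] [InnerProductSpace ℂ H]
    {J : H →ₗ[ℂ] (X → Λ)} {kf : X → Λ → H} (h : IsVRKHS K H J kf) (x y : X) (ξ η : Λ) :
    ⟪kf x ξ, kf y η⟫ = ⟪ξ, K y x η⟫ := by
  rw [h.repro, h.kfun_eq]

/-- Uniqueness of the RKHS of a kernel. -/
theorem aux_unique {X Λ : Type*} [NormedAddCommGroup Λ] [InnerProductSpace ℂ Λ]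
    {K : X → X → Λ →L[ℂ] Λ}
    {H₁ : Type*} [NormedAddCommGroup H₁] [InnerProductSpace ℂ H₁] [CompleteSpace H₁]
    {J₁ : H₁ →ₗ[ℂ] (X → Λ)} {k₁ : X → Λ → H₁} (h₁ : IsVRKHS K H₁ J₁ k₁)
    {H₂ : Type*} [NormedAddCommGroup H₂] [InnerProductSpace ℂ H₂] [CompleteSpace H₂]
    {J₂ : H₂ →ₗ[ℂ] (X → Λ)} {k₂ : X → Λ → H₂} (h₂ : IsVRKHS K H₂ J₂ k₂) :
    RKHSle J₁ J₂ := by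
  set v : X × Λ → H₁ := fun p => k₁ p.1 p.2 with hv
  set w : X × Λ → H₂ := fun p => k₂ p.1 p.2 with hw
  have hgram : ∀ i j, ⟪v i, v j⟫ = ⟪w i, w j⟫ := by
    intro i j
    simp only [hv, hw]
    rw [aux_gram_inner h₁, aux_gram_inner h₂]
  let R : Submodule ℂ (H₁ × H₂) := LinearMap.range
    ((Finsupp.linearCombination ℂ v).prod (Finsupp.linearCombination ℂ w))
  let M := R.topologicalClosure
  have hMc : IsClosed (M : Set (H₁ × H₂)) := R.isClosed_topologicalClosure
  have hnorm : ∀ p ∈ M, ‖p.1‖ = ‖p.2‖ := by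
    have hcl : IsClosed {p : H₁ × H₂ | ‖p.1‖ = ‖p.2‖} :=
      isClosed_eq (by fun_prop) (by fun_prop)
    intro p hp
    refine closure_minimal (s := (R : Set (H₁ × H₂))) ?_ hcl hp
    rintro _ ⟨c, rfl⟩
    exact aux_gram v w hgram c
  have hJ : ∀ p ∈ M, ∀ x ξ, ⟪k₁ x ξ, p.1⟫ = ⟪k₂ x ξ, p.2⟫ := by
    intro p hp x ξ
    have hcl : IsClosed {p : H₁ × H₂ | ⟪k₁ x ξ, p.1⟫ = ⟪k₂ x ξ, p.2⟫} :=
      isClosed_eq (by fun_prop) (by fun_prop)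
    refine closure_minimal (s := (R : Set (H₁ × H₂))) ?_ hcl hp
    rintro _ ⟨c, rfl⟩
    simp only [Set.mem_ofPred_eq, LinearMap.prod_apply, Function.prod_apply,
      Finsupp.linearCombination_apply, Finsupp.sum, inner_sum, inner_smul_right]
    exact Finset.sum_congr rfl fun i _ => by rw [hgram (x, ξ) i]
  let T : M →ₗ[ℂ] H₁ := (LinearMap.fst ℂ H₁ H₂).comp M.subtype
  have hT : Isometry T := by
    refine AddMonoidHomClass.isometry_of_norm T fun p => ?_
    have := hnorm p.1 p.2
    simp only [T, LinearMap.comp_apply, Submodule.subtype_apply, LinearMap.fst_apply]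
    rw [← Submodule.norm_coe, Prod.norm_def, ← this, max_self]
  have : CompleteSpace M := hMc.completeSpace_coe
  have hrc : IsClosed (Set.range T) := hT.isClosedEmbedding.isClosed_range
  have hrt : LinearMap.range T = ⊤ := by
    have hc : (LinearMap.range T).topologicalClosure = LinearMap.range T :=
      IsClosed.submodule_topologicalClosure_eq (by rw [LinearMap.coe_range]; exact hrc)
    rw [← hc, Submodule.topologicalClosure_eq_top_iff, Submodule.eq_bot_iff]
    intro f hf
    apply h₁.inj
    rw [map_zero]
    funext x
    refine ext_inner_left ℂ fun ξ => ?_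
    rw [← h₁.repro, Pi.zero_apply, inner_zero_right]
    refine hf _ ⟨⟨(k₁ x ξ, k₂ x ξ), R.le_topologicalClosure
      ⟨Finsupp.single (x, ξ) 1, by simp [hv, hw]⟩⟩, rfl⟩
  intro f
  have hf : f ∈ LinearMap.range T := hrt ▸ Submodule.mem_top
  obtain ⟨⟨⟨a, g⟩, hp⟩, rfl⟩ := hf
  refine ⟨g, ?_, (hnorm _ hp).symm⟩
  funext x
  refine ext_inner_left ℂ fun ξ => ?_
  rw [← h₁.repro, ← h₂.repro]
  exact (hJ _ hp x ξ).symm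

/-- The RKHS of a sum of two kernels with trivially intersecting RKHSs. -/
theorem aux_sum {X Λ : Type*} [NormedAddCommGroup Λ] [InnerProductSpace ℂ Λ]
    {K₁ K₂ K : X → X → Λ →L[ℂ] Λ}
    {H₁ : Type*} [NormedAddCommGroup H₁] [InnerProductSpace ℂ H₁] [CompleteSpace H₁]
    {J₁ : H₁ →ₗ[ℂ] (X → Λ)} {k₁ : X → Λ → H₁} (h₁ : IsVRKHS K₁ H₁ J₁ k₁)
    {H₂ : Type*} [NormedAddCommGroup H₂] [InnerProductSpace ℂ H₂] [CompleteSpace H₂]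
    {J₂ : H₂ →ₗ[ℂ] (X → Λ)} {k₂ : X → Λ → H₂} (h₂ : IsVRKHS K₂ H₂ J₂ k₂)
    {H : Type*} [NormedAddCommGroup H] [InnerProductSpace ℂ H] [CompleteSpace H]
    {J : H →ₗ[ℂ] (X → Λ)} {k : X → Λ → H} (h : IsVRKHS K H J k)
    (hK : ∀ x y, K x y = K₁ x y + K₂ x y)
    (hint : ∀ f g, J₁ f = J₂ g → J₁ f = 0) :
    (∀ f : H, ∃ a b, J f = J₁ a + J₂ b ∧ ‖f‖ ^ 2 = ‖a‖ ^ 2 + ‖b‖ ^ 2) ∧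
    (∀ a b, ∃ f : H, J f = J₁ a + J₂ b ∧ ‖f‖ ^ 2 = ‖a‖ ^ 2 + ‖b‖ ^ 2) := by
  let e := WithLp.linearEquiv 2 ℂ (H₁ × H₂)
  let JJ : WithLp 2 (H₁ × H₂) →ₗ[ℂ] (X → Λ) := (J₁.coprod J₂).comp e.toLinearMap
  have hJJ : ∀ p, JJ p = J₁ p.fst + J₂ p.snd := fun p => rfl
  have hs : IsVRKHS K (WithLp 2 (H₁ × H₂)) JJ (fun x ξ => WithLp.toLp 2 (k₁ x ξ, k₂ x ξ)) := by
    refine ⟨?_, ?_, ?_⟩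
    · refine (injective_iff_map_eq_zero JJ).2 fun p hp => ?_
      rw [hJJ] at hp
      have h0 : J₁ p.fst = 0 := hint _ (-p.snd) (by rw [map_neg]; exact eq_neg_of_add_eq_zero_left hp)
      have h0' : J₂ p.snd = 0 := by rwa [h0, zero_add] at hp
      have e1 : p.fst = 0 := h₁.inj (by rw [h0, map_zero])
      have e2 : p.snd = 0 := h₂.inj (by rw [h0', map_zero])
      have : ‖p‖ ^ 2 = 0 := by rw [WithLp.prod_norm_sq_eq_of_L2, e1, e2]; simp
      simpa using this
    · intro x ξ
      rw [hJJ]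
      funext y
      simp [h₁.kfun_eq, h₂.kfun_eq, hK]
    · intro f x ξ
      rw [WithLp.prod_inner_apply, hJJ]
      simp [h₁.repro, h₂.repro, inner_add_right]
  constructor
  · intro f
    obtain ⟨p, hp, hn⟩ := aux_unique h hs f
    exact ⟨p.fst, p.snd, by rw [← hp, hJJ], by rw [← hn, WithLp.prod_norm_sq_eq_of_L2]⟩
  · intro a b
    obtain ⟨f, hp, hn⟩ := aux_unique hs h (WithLp.toLp 2 (a, b))
    exact ⟨f, by rw [hp, hJJ]; rfl, by rw [hn, WithLp.prod_norm_sq_eq_of_L2]; rfl⟩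

variable {E : Type*} [NormedAddCommGroup E] [InnerProductSpace ℝ E] [CompleteSpace E]
  [SecondCountableTopology E] [MeasurableSpace E] [BorelSpace E]

open BoundedContinuousFunction in
/-- A real integrable density all of whose Fourier coefficients vanish is zero. -/
theorem aux_real (Q : Measure E) [IsFiniteMeasure Q] (u : E → ℝ) (hu : Integrable u Q)
    (h : ∀ x : E, ∫ t, innerProbChar x t * (u t : ℂ) ∂Q = 0) : u =ᵐ[Q] 0 := by
  have hup : Integrable (fun t => max (u t) 0) Q := hu.pos_part
  have hun : Integrable (fun t => max (-u t) 0) Q := hu.neg_part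
  have m1 : AEMeasurable (fun t => ENNReal.ofReal (u t)) Q := hu.1.aemeasurable.ennreal_ofReal
  have m2 : AEMeasurable (fun t => ENNReal.ofReal (-u t)) Q :=
    hu.neg.1.aemeasurable.ennreal_ofReal
  have f1 : IsFiniteMeasure (Q.withDensity fun t => ENNReal.ofReal (u t)) :=
    isFiniteMeasure_withDensity_ofReal hu.2
  have f2 : IsFiniteMeasure (Q.withDensity fun t => ENNReal.ofReal (-u t)) :=
    isFiniteMeasure_withDensity_ofReal hu.neg.2
  have hb : ∀ (x : E) (w : E → ℝ), Integrable w Q →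
      Integrable (fun t => w t • innerProbChar x t) Q := by
    intro x w hw
    have := hw.ofReal (𝕜 := ℂ)
    refine (Integrable.bdd_mul (c := 1) this
      (innerProbChar x).continuous.aestronglyMeasurable ?_).congr ?_
    · exact Filter.Eventually.of_forall fun t => by
        rw [innerProbChar_apply, Complex.norm_exp_ofReal_mul_I]
    · exact Filter.Eventually.of_forall fun t => by
        simp [mul_comm]
  have key : (Q.withDensity fun t => ENNReal.ofReal (u t)) =
      Q.withDensity fun t => ENNReal.ofReal (-u t) := by
    refine Measure.ext_of_charFun ?_
    funext x
    rw [charFun_eq_integral_innerProbChar, charFun_eq_integral_innerProbChar,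
      integral_withDensity_eq_integral_toReal_smul₀ m1 (by simp),
      integral_withDensity_eq_integral_toReal_smul₀ m2 (by simp), ← sub_eq_zero]
    simp only [ENNReal.toReal_ofReal']
    rw [← integral_sub (hb x _ hup) (hb x _ hun), ← h x]
    refine integral_congr_ae (Filter.Eventually.of_forall fun t => ?_)
    have : u t = max (u t) 0 - max (-u t) 0 := by
      rcases le_total (u t) 0 with h | h <;> simp [h]
    simp only
    rw [← sub_smul, ← this, Complex.real_smul, mul_comm]
  rw [withDensity_eq_iff_of_sigmaFinite m1 m2] at key
  filter_upwards [key] with t ht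
  have := congrArg ENNReal.toReal ht
  simp only [ENNReal.toReal_ofReal'] at this
  rcases le_total (u t) 0 with h | h <;> simp [h] at this ⊢ <;> linarith

theorem aux_star (x t : E) : starRingEnd ℂ (BoundedContinuousFunction.innerProbChar x t) =
    BoundedContinuousFunction.innerProbChar (-x) t := by
  rw [BoundedContinuousFunction.innerProbChar_apply, BoundedContinuousFunction.innerProbChar_apply,
    ← Complex.exp_conj]
  simp

open BoundedContinuousFunction in
theorem aux_complex (Q : Measure E) [IsFiniteMeasure Q] (u : E → ℂ) (hu : Integrable u Q)
    (h : ∀ x : E, ∫ t, innerProbChar x t * u t ∂Q = 0) : u =ᵐ[Q] 0 := by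
  have hb : ∀ (x : E) (w : E → ℂ), Integrable w Q →
      Integrable (fun t => innerProbChar x t * w t) Q := by
    intro x w hw
    refine (Integrable.bdd_mul (c := 1) hw
      (innerProbChar x).continuous.aestronglyMeasurable ?_)
    exact Filter.Eventually.of_forall fun t => by
        rw [innerProbChar_apply, Complex.norm_exp_ofReal_mul_I]
  have hc : Integrable (fun t => starRingEnd ℂ (u t)) Q :=
    (Complex.conjLIE.toContinuousLinearEquiv.toContinuousLinearMap.integrable_comp hu)
  have h' : ∀ x : E, ∫ t, innerProbChar x t * starRingEnd ℂ (u t) ∂Q = 0 := by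
    intro x
    have := congrArg (starRingEnd ℂ) (h (-x))
    rw [← integral_conj, map_zero] at this
    rw [← this]
    refine integral_congr_ae (Filter.Eventually.of_forall fun t => ?_)
    simp only [map_mul, aux_star, neg_neg]
  have hre : (fun t => (u t).re) =ᵐ[Q] 0 := by
    refine aux_real Q _ hu.re fun x => ?_
    have : ∫ t, (2⁻¹ : ℂ) * (innerProbChar x t * u t + innerProbChar x t * starRingEnd ℂ (u t)) ∂Q
        = 0 := by
      rw [integral_const_mul, integral_add (hb x _ hu) (hb x _ hc), h, h']; simp
    rw [← this]
    refine integral_congr_ae (Filter.Eventually.of_forall fun t => ?_)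
    simp only [← mul_add, Complex.add_conj]
    push_cast; ring
  have him : (fun t => (u t).im) =ᵐ[Q] 0 := by
    refine aux_real Q _ hu.im fun x => ?_
    have : ∫ t, (-2⁻¹ * Complex.I : ℂ) *
        (innerProbChar x t * u t - innerProbChar x t * starRingEnd ℂ (u t)) ∂Q = 0 := by
      rw [integral_const_mul, integral_sub (hb x _ hu) (hb x _ hc), h, h']; simp
    rw [← this]
    refine integral_congr_ae (Filter.Eventually.of_forall fun t => ?_)
    simp only [← mul_sub, Complex.sub_conj]
    push_cast
    linear_combination (innerProbChar x t * (u t).im) * Complex.I_sq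
  filter_upwards [hre, him] with t h1 h2
  exact Complex.ext h1 h2

open BoundedContinuousFunction in
/-- Characters are total in `L²` of a finite measure. -/
theorem aux_dense (Q : Measure E) [IsFiniteMeasure Q] :
    (LinearMap.range (Finsupp.linearCombination ℂ
      fun x : E => BoundedContinuousFunction.toLp 2 Q ℂ (innerProbChar x))).topologicalClosure
      = ⊤ := by
  rw [Submodule.topologicalClosure_eq_top_iff, Submodule.eq_bot_iff]
  intro f hf
  rw [Lp.eq_zero_iff_ae_eq_zero]
  refine aux_complex Q f ((Lp.memLp f).integrable (by norm_num)) fun x => ?_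
  have := hf (BoundedContinuousFunction.toLp 2 Q ℂ (innerProbChar (-x)))
    ⟨Finsupp.single (-x) 1, by simp⟩
  rw [L2.inner_def] at this
  rw [← this]
  refine integral_congr_ae ?_
  filter_upwards [BoundedContinuousFunction.coeFn_toLp (p := 2) (𝕜 := ℂ) Q (innerProbChar (-x))]
    with t ht
  rw [ht, RCLike.inner_apply, aux_star, neg_neg, mul_comm]

open BoundedContinuousFunction in
/-- Simultaneous approximation. -/
theorem aux_approx (Qa Qs : Measure E) [IsFiniteMeasure Qa] [IsFiniteMeasure Qs]
    (hsing : Qa.MutuallySingular Qs) (x : E) {ε : ℝ} (hε : 0 < ε) :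
    ∃ c : E →₀ ℂ,
      eLpNorm (⇑(Finsupp.linearCombination ℂ innerProbChar c - innerProbChar x)) 2 Qa
        ≤ ENNReal.ofReal ε ∧
      eLpNorm (⇑(Finsupp.linearCombination ℂ (innerProbChar (E := E)) c)) 2 Qs
        ≤ ENNReal.ofReal ε := by
  obtain ⟨S, hS, hSa, hSs⟩ := hsing
  set F : E → ℂ := Sᶜ.indicator (innerProbChar x) with hF
  have hmem : MemLp F 2 (Qa + Qs) :=
    (MemLp.of_bound (innerProbChar x).continuous.aestronglyMeasurable 1
      (Filter.Eventually.of_forall fun t => by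
        rw [innerProbChar_apply, Complex.norm_exp_ofReal_mul_I])).indicator hS.compl
  have hd := (Submodule.dense_iff_topologicalClosure_eq_top.2 (aux_dense (Qa + Qs)))
  obtain ⟨_, ⟨c, rfl⟩, hc⟩ := hd.exists_dist_lt (hmem.toLp F) hε
  have hlc : Finsupp.linearCombination ℂ
      (fun x : E => BoundedContinuousFunction.toLp 2 (Qa + Qs) ℂ (innerProbChar x)) c
      = BoundedContinuousFunction.toLp 2 (Qa + Qs) ℂ
        (Finsupp.linearCombination ℂ innerProbChar c) := by
    simp [Finsupp.linearCombination_apply, Finsupp.sum, map_sum, map_smul]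
  set P := Finsupp.linearCombination ℂ (innerProbChar (E := E)) c with hP
  rw [hlc, dist_comm] at hc
  have hle : eLpNorm (⇑P - F) 2 (Qa + Qs) ≤ ENNReal.ofReal ε := by
    have h1 : edist (BoundedContinuousFunction.toLp 2 (Qa + Qs) ℂ P) (hmem.toLp F)
        ≤ ENNReal.ofReal ε := by
      rw [edist_dist]; exact ENNReal.ofReal_le_ofReal hc.le
    rw [Lp.edist_def] at h1
    refine le_trans (le_of_eq (eLpNorm_congr_ae ?_)) h1
    filter_upwards [BoundedContinuousFunction.coeFn_toLp (p := 2) (𝕜 := ℂ) (Qa + Qs) P,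
      hmem.coeFn_toLp] with t h1 h2
    simp [h1, h2]
  refine ⟨c, ?_, ?_⟩
  · refine le_trans ?_ ((eLpNorm_mono_measure _ (Measure.le_add_right le_rfl)).trans hle)
    refine le_of_eq (eLpNorm_congr_ae ?_)
    have : ∀ᵐ t ∂Qa, t ∈ Sᶜ := by
      rw [ae_iff]; simpa using hSa
    filter_upwards [this] with t ht
    simp [hF, Set.indicator_of_mem ht, hP]
  · refine le_trans ?_ ((eLpNorm_mono_measure _ (Measure.le_add_left le_rfl)).trans hle)
    refine le_of_eq (eLpNorm_congr_ae ?_)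
    have : ∀ᵐ t ∂Qs, t ∉ Sᶜ := by
      rw [ae_iff]; simp only [not_not]; exact hSs
    filter_upwards [this] with t ht
    simp [hF, Set.indicator_of_notMem ht, hP]

open BoundedContinuousFunction in
/-- Norms of kernel combinations are `L²` norms of trigonometric polynomials. -/
theorem aux_norm {Λ : Type*} [NormedAddCommGroup Λ] [InnerProductSpace ℂ Λ]
    {K : E → E → Λ →L[ℂ] Λ} {H : Type*} [NormedAddCommGroup H] [InnerProductSpace ℂ H]
    {J : H →ₗ[ℂ] (E → Λ)} {kf : E → Λ → H} (h : IsVRKHS K H J kf)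
    (Q : Measure E) [IsFiniteMeasure Q] (ξ : Λ)
    (hQ : ∀ x y, ⟪ξ, K x y ξ⟫ =
      ∫ t, Complex.exp (Complex.I * ((@inner ℝ _ _ (x - y) t : ℝ) : ℂ)) ∂Q) (c : E →₀ ℂ) :
    ENNReal.ofReal ‖Finsupp.linearCombination ℂ (fun x => kf x ξ) c‖ =
      eLpNorm (⇑(Finsupp.linearCombination ℂ (innerProbChar (E := E)) c)) 2 Q := by
  have hg := aux_gram (fun x => kf x ξ)
    (fun x : E => BoundedContinuousFunction.toLp 2 Q ℂ (innerProbChar x)) (by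
      intro x y
      rw [aux_gram_inner h, hQ, L2.inner_def]
      refine integral_congr_ae ?_
      filter_upwards [BoundedContinuousFunction.coeFn_toLp (p := 2) (𝕜 := ℂ) Q (innerProbChar x),
        BoundedContinuousFunction.coeFn_toLp (p := 2) (𝕜 := ℂ) Q (innerProbChar y)] with t h1 h2
      rw [h1, h2, RCLike.inner_apply, aux_star, innerProbChar_apply, innerProbChar_apply,
        ← Complex.exp_add, inner_sub_left, inner_neg_right, real_inner_comm t y,
        real_inner_comm t x]
      congr 1
      push_cast
      ring) c
  have hlc : Finsupp.linearCombination ℂ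
      (fun x : E => BoundedContinuousFunction.toLp 2 Q ℂ (innerProbChar x)) c
      = BoundedContinuousFunction.toLp 2 Q ℂ
        (Finsupp.linearCombination ℂ innerProbChar c) := by
    simp [Finsupp.linearCombination_apply, Finsupp.sum, map_sum, map_smul]
  rw [hg, hlc, Lp.norm_def, ENNReal.ofReal_toReal (Lp.eLpNorm_ne_top _)]
  exact eLpNorm_congr_ae (BoundedContinuousFunction.coeFn_toLp (p := 2) (𝕜 := ℂ) Q _)

theorem aux_repro {X Λ : Type*} [NormedAddCommGroup Λ] [InnerProductSpace ℂ Λ]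
    {K : X → X → Λ →L[ℂ] Λ} {H : Type*} [NormedAddCommGroup H] [InnerProductSpace ℂ H]
    {J : H →ₗ[ℂ] (X → Λ)} {kf : X → Λ → H} (h : IsVRKHS K H J kf) (ξ : Λ) (c : X →₀ ℂ) (f : H) :
    ⟪Finsupp.linearCombination ℂ (fun x => kf x ξ) c, f⟫ =
      c.sum fun x a => starRingEnd ℂ a * ⟪ξ, J f x⟫ := by
  simp only [Finsupp.linearCombination_apply, Finsupp.sum, sum_inner, inner_smul_left, h.repro]

/-- A sum of two functions from absolutely continuous RKHSs that is also a sum of two functions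
from singular RKHSs vanishes. -/
theorem aux_disjoint {Λ : Type*} [NormedAddCommGroup Λ] [InnerProductSpace ℂ Λ]
    {A₁ A₂ S₁ S₂ : E → E → Λ →L[ℂ] Λ} (Qa₁ Qa₂ Qs₁ Qs₂ : Λ → Measure E)
    (fa₁ : ∀ ξ, IsFiniteMeasure (Qa₁ ξ)) (fa₂ : ∀ ξ, IsFiniteMeasure (Qa₂ ξ))
    (fs₁ : ∀ ξ, IsFiniteMeasure (Qs₁ ξ)) (fs₂ : ∀ ξ, IsFiniteMeasure (Qs₂ ξ))
    (hsing : ∀ ξ, (Qa₁ ξ + Qa₂ ξ).MutuallySingular (Qs₁ ξ + Qs₂ ξ))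
    (ha₁ : ∀ x y ξ, ⟪ξ, A₁ x y ξ⟫ =
      ∫ t, Complex.exp (Complex.I * ((@inner ℝ _ _ (x - y) t : ℝ) : ℂ)) ∂(Qa₁ ξ))
    (ha₂ : ∀ x y ξ, ⟪ξ, A₂ x y ξ⟫ =
      ∫ t, Complex.exp (Complex.I * ((@inner ℝ _ _ (x - y) t : ℝ) : ℂ)) ∂(Qa₂ ξ))
    (hs₁ : ∀ x y ξ, ⟪ξ, S₁ x y ξ⟫ =
      ∫ t, Complex.exp (Complex.I * ((@inner ℝ _ _ (x - y) t : ℝ) : ℂ)) ∂(Qs₁ ξ))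
    (hs₂ : ∀ x y ξ, ⟪ξ, S₂ x y ξ⟫ =
      ∫ t, Complex.exp (Complex.I * ((@inner ℝ _ _ (x - y) t : ℝ) : ℂ)) ∂(Qs₂ ξ))
    {Ha₁ : Type*} [NormedAddCommGroup Ha₁] [InnerProductSpace ℂ Ha₁]
    {Ja₁ : Ha₁ →ₗ[ℂ] (E → Λ)} {ka₁ : E → Λ → Ha₁} (ra₁ : IsVRKHS A₁ Ha₁ Ja₁ ka₁)
    {Ha₂ : Type*} [NormedAddCommGroup Ha₂] [InnerProductSpace ℂ Ha₂]
    {Ja₂ : Ha₂ →ₗ[ℂ] (E → Λ)} {ka₂ : E → Λ → Ha₂} (ra₂ : IsVRKHS A₂ Ha₂ Ja₂ ka₂)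
    {Hs₁ : Type*} [NormedAddCommGroup Hs₁] [InnerProductSpace ℂ Hs₁]
    {Js₁ : Hs₁ →ₗ[ℂ] (E → Λ)} {ks₁ : E → Λ → Hs₁} (rs₁ : IsVRKHS S₁ Hs₁ Js₁ ks₁)
    {Hs₂ : Type*} [NormedAddCommGroup Hs₂] [InnerProductSpace ℂ Hs₂]
    {Js₂ : Hs₂ →ₗ[ℂ] (E → Λ)} {ks₂ : E → Λ → Hs₂} (rs₂ : IsVRKHS S₂ Hs₂ Js₂ ks₂)
    (a₁ : Ha₁) (a₂ : Ha₂) (s₁ : Hs₁) (s₂ : Hs₂) (heq : Ja₁ a₁ + Ja₂ a₂ = Js₁ s₁ + Js₂ s₂) :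
    Ja₁ a₁ + Ja₂ a₂ = 0 := by
  funext x
  refine ext_inner_left ℂ fun ξ => ?_
  rw [Pi.zero_apply, inner_zero_right, Pi.add_apply, inner_add_right]
  have := fa₁ ξ
  have := fa₂ ξ
  have := fs₁ ξ
  have := fs₂ ξ
  set C := ‖a₁‖ + ‖a₂‖ + ‖s₁‖ + ‖s₂‖ with hC
  have hC0 : 0 ≤ C := by positivity
  have hbound : ∀ ε : ℝ, 0 < ε → ‖⟪ξ, Ja₁ a₁ x⟫ + ⟪ξ, Ja₂ a₂ x⟫‖ ≤ ε * C := by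
    intro ε hε
    obtain ⟨c, hca, hcs⟩ := aux_approx _ _ (hsing ξ) x hε
    have hsub : Finsupp.linearCombination ℂ (BoundedContinuousFunction.innerProbChar (E := E)) c
        - BoundedContinuousFunction.innerProbChar x
        = Finsupp.linearCombination ℂ BoundedContinuousFunction.innerProbChar
          (c - Finsupp.single x 1) := by simp
    rw [hsub] at hca
    have b1 : ‖Finsupp.linearCombination ℂ (fun y => ka₁ y ξ) (c - Finsupp.single x 1)‖ ≤ ε := by
      rw [← ENNReal.ofReal_le_ofReal_iff hε.le, aux_norm ra₁ (Qa₁ ξ) ξ (fun x y => ha₁ x y ξ)]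
      exact (eLpNorm_mono_measure _ (Measure.le_add_right le_rfl)).trans hca
    have b2 : ‖Finsupp.linearCombination ℂ (fun y => ka₂ y ξ) (c - Finsupp.single x 1)‖ ≤ ε := by
      rw [← ENNReal.ofReal_le_ofReal_iff hε.le, aux_norm ra₂ (Qa₂ ξ) ξ (fun x y => ha₂ x y ξ)]
      exact (eLpNorm_mono_measure _ (Measure.le_add_left le_rfl)).trans hca
    have b3 : ‖Finsupp.linearCombination ℂ (fun y => ks₁ y ξ) c‖ ≤ ε := by
      rw [← ENNReal.ofReal_le_ofReal_iff hε.le, aux_norm rs₁ (Qs₁ ξ) ξ (fun x y => hs₁ x y ξ)]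
      exact (eLpNorm_mono_measure _ (Measure.le_add_right le_rfl)).trans hcs
    have b4 : ‖Finsupp.linearCombination ℂ (fun y => ks₂ y ξ) c‖ ≤ ε := by
      rw [← ENNReal.ofReal_le_ofReal_iff hε.le, aux_norm rs₂ (Qs₂ ξ) ξ (fun x y => hs₂ x y ξ)]
      exact (eLpNorm_mono_measure _ (Measure.le_add_left le_rfl)).trans hcs
    have hkey : ⟪Finsupp.linearCombination ℂ (fun y => ka₁ y ξ) c, a₁⟫
        + ⟪Finsupp.linearCombination ℂ (fun y => ka₂ y ξ) c, a₂⟫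
        = ⟪Finsupp.linearCombination ℂ (fun y => ks₁ y ξ) c, s₁⟫
        + ⟪Finsupp.linearCombination ℂ (fun y => ks₂ y ξ) c, s₂⟫ := by
      rw [aux_repro ra₁, aux_repro ra₂, aux_repro rs₁, aux_repro rs₂, ← Finsupp.sum_add,
        ← Finsupp.sum_add]
      refine Finsupp.sum_congr fun y _ => ?_
      rw [← mul_add, ← mul_add, ← inner_add_right, ← inner_add_right]
      have := congrFun heq y
      simp only [Pi.add_apply] at this
      rw [this]
    have e1 : ⟪ξ, Ja₁ a₁ x⟫ = ⟪Finsupp.linearCombination ℂ (fun y => ka₁ y ξ) c, a₁⟫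
        - ⟪Finsupp.linearCombination ℂ (fun y => ka₁ y ξ) (c - Finsupp.single x 1), a₁⟫ := by
      simp [inner_sub_left, ra₁.repro]
    have e2 : ⟪ξ, Ja₂ a₂ x⟫ = ⟪Finsupp.linearCombination ℂ (fun y => ka₂ y ξ) c, a₂⟫
        - ⟪Finsupp.linearCombination ℂ (fun y => ka₂ y ξ) (c - Finsupp.single x 1), a₂⟫ := by
      simp [inner_sub_left, ra₂.repro]
    have e3 : ⟪ξ, Ja₁ a₁ x⟫ + ⟪ξ, Ja₂ a₂ x⟫ =
        ⟪Finsupp.linearCombination ℂ (fun y => ks₁ y ξ) c, s₁⟫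
        + ⟪Finsupp.linearCombination ℂ (fun y => ks₂ y ξ) c, s₂⟫
        - ⟪Finsupp.linearCombination ℂ (fun y => ka₁ y ξ) (c - Finsupp.single x 1), a₁⟫
        - ⟪Finsupp.linearCombination ℂ (fun y => ka₂ y ξ) (c - Finsupp.single x 1), a₂⟫ := by
      rw [e1, e2, ← hkey]; ring
    rw [e3]
    have n1 := (norm_inner_le_norm (𝕜 := ℂ) _ a₁).trans
      (mul_le_mul_of_nonneg_right b1 (norm_nonneg a₁))
    have n2 := (norm_inner_le_norm (𝕜 := ℂ) _ a₂).trans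
      (mul_le_mul_of_nonneg_right b2 (norm_nonneg a₂))
    have n3 := (norm_inner_le_norm (𝕜 := ℂ) _ s₁).trans
      (mul_le_mul_of_nonneg_right b3 (norm_nonneg s₁))
    have n4 := (norm_inner_le_norm (𝕜 := ℂ) _ s₂).trans
      (mul_le_mul_of_nonneg_right b4 (norm_nonneg s₂))
    have t1 := norm_sub_le
      (⟪Finsupp.linearCombination ℂ (fun y => ks₁ y ξ) c, s₁⟫
        + ⟪Finsupp.linearCombination ℂ (fun y => ks₂ y ξ) c, s₂⟫
        - ⟪Finsupp.linearCombination ℂ (fun y => ka₁ y ξ) (c - Finsupp.single x 1), a₁⟫)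
      ⟪Finsupp.linearCombination ℂ (fun y => ka₂ y ξ) (c - Finsupp.single x 1), a₂⟫
    have t2 := norm_sub_le
      (⟪Finsupp.linearCombination ℂ (fun y => ks₁ y ξ) c, s₁⟫
        + ⟪Finsupp.linearCombination ℂ (fun y => ks₂ y ξ) c, s₂⟫)
      ⟪Finsupp.linearCombination ℂ (fun y => ka₁ y ξ) (c - Finsupp.single x 1), a₁⟫
    have t3 := norm_add_le
      ⟪Finsupp.linearCombination ℂ (fun y => ks₁ y ξ) c, s₁⟫
      ⟪Finsupp.linearCombination ℂ (fun y => ks₂ y ξ) c, s₂⟫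
    rw [hC]
    linarith
  rw [← norm_eq_zero]
  refine le_antisymm (le_of_forall_pos_le_add fun δ hδ => ?_) (norm_nonneg _)
  refine (hbound (δ / (C + 1)) (by positivity)).trans ?_
  rw [zero_add, div_mul_eq_mul_div, div_le_iff₀ (by positivity)]
  nlinarith

end Helpers

/-- For translation-invariant kernels K = K_c + K_s and G = G_c + G_s coming from
Lebesgue decompositions μ = μ_c + μ_s and ν = ν_c + ν_s (encoded weakly via diagonal measures),
H_K ⪯ H_G iff H_{K_c} ⪯ H_{G_c} and H_{K_s} ⪯ H_{G_s}. -/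
theorem stmt15 {Λ : Type*} [NormedAddCommGroup Λ] [InnerProductSpace ℂ Λ] [CompleteSpace Λ]
    (d : ℕ)
    (Qμc Qμs Qνc Qνs : Λ → Measure (EuclideanSpace ℝ (Fin d)))
    (hμcfin : ∀ ξ, IsFiniteMeasure (Qμc ξ)) (hμsfin : ∀ ξ, IsFiniteMeasure (Qμs ξ))
    (hνcfin : ∀ ξ, IsFiniteMeasure (Qνc ξ)) (hνsfin : ∀ ξ, IsFiniteMeasure (Qνs ξ))
    (hμcac : ∀ ξ, Qμc ξ ≪ volume) (hμssing : ∀ ξ, (Qμs ξ).MutuallySingular volume)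
    (hνcac : ∀ ξ, Qνc ξ ≪ volume) (hνssing : ∀ ξ, (Qνs ξ).MutuallySingular volume)
    (Kc Ks K Gc Gs G : EuclideanSpace ℝ (Fin d) → EuclideanSpace ℝ (Fin d) → Λ →L[ℂ] Λ)
    (hKc : ∀ x y ξ, ⟪ξ, Kc x y ξ⟫ =
      ∫ t, Complex.exp (Complex.I * ((@inner ℝ _ _ (x - y) t : ℝ) : ℂ)) ∂(Qμc ξ))
    (hKs : ∀ x y ξ, ⟪ξ, Ks x y ξ⟫ =
      ∫ t, Complex.exp (Complex.I * ((@inner ℝ _ _ (x - y) t : ℝ) : ℂ)) ∂(Qμs ξ))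
    (hGc : ∀ x y ξ, ⟪ξ, Gc x y ξ⟫ =
      ∫ t, Complex.exp (Complex.I * ((@inner ℝ _ _ (x - y) t : ℝ) : ℂ)) ∂(Qνc ξ))
    (hGs : ∀ x y ξ, ⟪ξ, Gs x y ξ⟫ =
      ∫ t, Complex.exp (Complex.I * ((@inner ℝ _ _ (x - y) t : ℝ) : ℂ)) ∂(Qνs ξ))
    (hK : ∀ x y, K x y = Kc x y + Ks x y) (hG : ∀ x y, G x y = Gc x y + Gs x y)
    {HKc : Type*} [NormedAddCommGroup HKc] [InnerProductSpace ℂ HKc] [CompleteSpace HKc]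
    (JKc : HKc →ₗ[ℂ] (EuclideanSpace ℝ (Fin d) → Λ)) (kfKc : EuclideanSpace ℝ (Fin d) → Λ → HKc)
    (hHKc : IsVRKHS Kc HKc JKc kfKc)
    {HKs : Type*} [NormedAddCommGroup HKs] [InnerProductSpace ℂ HKs] [CompleteSpace HKs]
    (JKs : HKs →ₗ[ℂ] (EuclideanSpace ℝ (Fin d) → Λ)) (kfKs : EuclideanSpace ℝ (Fin d) → Λ → HKs)
    (hHKs : IsVRKHS Ks HKs JKs kfKs)
    {HK : Type*} [NormedAddCommGroup HK] [InnerProductSpace ℂ HK] [CompleteSpace HK]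
    (JK : HK →ₗ[ℂ] (EuclideanSpace ℝ (Fin d) → Λ)) (kfK : EuclideanSpace ℝ (Fin d) → Λ → HK)
    (hHK : IsVRKHS K HK JK kfK)
    {HGc : Type*} [NormedAddCommGroup HGc] [InnerProductSpace ℂ HGc] [CompleteSpace HGc]
    (JGc : HGc →ₗ[ℂ] (EuclideanSpace ℝ (Fin d) → Λ)) (kfGc : EuclideanSpace ℝ (Fin d) → Λ → HGc)
    (hHGc : IsVRKHS Gc HGc JGc kfGc)
    {HGs : Type*} [NormedAddCommGroup HGs] [InnerProductSpace ℂ HGs] [CompleteSpace HGs]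
    (JGs : HGs →ₗ[ℂ] (EuclideanSpace ℝ (Fin d) → Λ)) (kfGs : EuclideanSpace ℝ (Fin d) → Λ → HGs)
    (hHGs : IsVRKHS Gs HGs JGs kfGs)
    {HG : Type*} [NormedAddCommGroup HG] [InnerProductSpace ℂ HG] [CompleteSpace HG]
    (JG : HG →ₗ[ℂ] (EuclideanSpace ℝ (Fin d) → Λ)) (kfG : EuclideanSpace ℝ (Fin d) → Λ → HG)
    (hHG : IsVRKHS G HG JG kfG) :
    RKHSle JK JG ↔ RKHSle JKc JGc ∧ RKHSle JKs JGs := by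
  have hsing : ∀ (μ₁ μ₂ ν₁ ν₂ : Measure (EuclideanSpace ℝ (Fin d))), μ₁ ≪ volume → μ₂ ≪ volume →
      ν₁.MutuallySingular volume → ν₂.MutuallySingular volume →
      (μ₁ + μ₂).MutuallySingular (ν₁ + ν₂) := by
    intro μ₁ μ₂ ν₁ ν₂ h1 h2 h3 h4
    refine Measure.MutuallySingular.add_left ?_ ?_
    · exact (Measure.MutuallySingular.add_left (h3.mono_ac Measure.AbsolutelyContinuous.rfl h1)
        (h4.mono_ac Measure.AbsolutelyContinuous.rfl h1)).symm
    · exact (Measure.MutuallySingular.add_left (h3.mono_ac Measure.AbsolutelyContinuous.rfl h2)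
        (h4.mono_ac Measure.AbsolutelyContinuous.rfl h2)).symm
  have main := aux_disjoint Qμc Qνc Qμs Qνs hμcfin hνcfin hμsfin hνsfin
    (fun ξ => hsing _ _ _ _ (hμcac ξ) (hνcac ξ) (hμssing ξ) (hνssing ξ)) hKc hGc hKs hGs
    hHKc hHGc hHKs hHGs
  obtain ⟨dK, dK'⟩ := aux_sum hHKc hHKs hHK hK (fun f g h => by
    have := main f 0 g 0 (by simpa using h)
    simpa using this)
  obtain ⟨dG, dG'⟩ := aux_sum hHGc hHGs hHG hG (fun f g h => by
    have := main 0 f 0 g (by simpa using h)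
    simpa using this)
  constructor
  · intro hle
    constructor
    · intro f
      obtain ⟨f', hf', hn'⟩ := dK' f 0
      obtain ⟨g, hg, hgn⟩ := hle f'
      obtain ⟨gc, gs, hdec, hdn⟩ := dG g
      have heq : JKc f = JGc gc + JGs gs := by
        rw [← hdec, hg, hf', map_zero, add_zero]
      have h0 := main f (-gc) 0 gs (by rw [heq, map_neg, map_zero]; abel)
      have h1 : JGc gc = JKc f := by
        rw [map_neg] at h0
        exact (eq_of_sub_eq_zero (by rw [sub_eq_add_neg]; exact h0)).symm
      have h2 : gs = 0 := hHGs.inj (by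
        rw [map_zero]; rw [h1] at heq; exact left_eq_add.1 heq)
      refine ⟨gc, h1, ?_⟩
      rw [h2] at hdn
      rw [hgn, hn'] at hdn
      simp only [norm_zero] at hdn
      exact ((sq_eq_sq₀ (norm_nonneg _) (norm_nonneg _)).1 (by linarith)).symm
    · intro f
      obtain ⟨f', hf', hn'⟩ := dK' 0 f
      obtain ⟨g, hg, hgn⟩ := hle f'
      obtain ⟨gc, gs, hdec, hdn⟩ := dG g
      have heq : JKs f = JGc gc + JGs gs := by
        rw [← hdec, hg, hf', map_zero, zero_add]
      have h0 := main 0 gc f (-gs) (by rw [heq, map_neg, map_zero]; abel)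
      rw [map_zero, zero_add] at h0
      have h2 : gc = 0 := hHGc.inj (by rw [map_zero, h0])
      refine ⟨gs, by rw [heq, h0, zero_add], ?_⟩
      rw [h2] at hdn
      rw [hgn, hn'] at hdn
      simp only [norm_zero] at hdn
      exact ((sq_eq_sq₀ (norm_nonneg _) (norm_nonneg _)).1 (by linarith)).symm
  · rintro ⟨hc, hs⟩ f
    obtain ⟨fc, fs, hf, hn⟩ := dK f
    obtain ⟨gc, hgc, hgcn⟩ := hc fc
    obtain ⟨gs, hgs, hgsn⟩ := hs fs
    obtain ⟨g, hg, hgn⟩ := dG' gc gs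
    refine ⟨g, by rw [hg, hgc, hgs, hf], ?_⟩
    refine (sq_eq_sq₀ (norm_nonneg _) (norm_nonneg _)).1 ?_
    rw [hgn, hn, hgcn, hgsn]
end
end

section
/- Let X = {x₁,…,x_n} be a finite set and K an 𝓛(Λ)-valued reproducing kernel on X. If there exists λ > 0 such that Σ_{j,k} (K(x_j,x_k)ξ_j, ξ_k)_Λ ≥ λ Σ_j ‖ξ_j‖²_Λ for all ξ_1,…,ξ_n ∈ Λ, then H_K = Λ^X, i.e., K admits no nontrivial refinement. Conversely, if K admits no nontrivial refinement (equivalently H_K = Λ^X), then Σ_{j,k}(K(x_j,x_k)ξ_j, ξ_k)_Λ > 0 whenever not all ξ_j are zero. If Λ is finite-dimensional, these two conditions are equivalent. -/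
open MeasureTheory ContinuousLinearMap
open scoped ComplexOrder

noncomputable section

local notation "⟪" x ", " y "⟫" => @inner ℂ _ _ x y

theorem stmt19_quad {X Λ : Type*} [Fintype X]
    [NormedAddCommGroup Λ] [InnerProductSpace ℂ Λ]
    (K : X → X → Λ →L[ℂ] Λ)
    {H : Type*} [NormedAddCommGroup H] [InnerProductSpace ℂ H]
    (J : H →ₗ[ℂ] (X → Λ)) (kf : X → Λ → H) (hH : IsVRKHS K H J kf) (ξ : X → Λ) :
    ∑ x, ∑ y, ⟪ξ y, K x y (ξ x)⟫ = ((‖∑ x, kf x (ξ x)‖ ^ 2 : ℝ) : ℂ) := by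
  have h := inner_self_eq_norm_sq_to_K (𝕜 := ℂ) (∑ x, kf x (ξ x))
  rw [inner_sum] at h
  simp only [sum_inner] at h
  simp only [hH.repro, hH.kfun_eq] at h
  rw [h]
  simp

theorem stmt19_J {X Λ : Type*} [Fintype X]
    [NormedAddCommGroup Λ] [InnerProductSpace ℂ Λ]
    (K : X → X → Λ →L[ℂ] Λ)
    {H : Type*} [NormedAddCommGroup H] [InnerProductSpace ℂ H]
    (J : H →ₗ[ℂ] (X → Λ)) (kf : X → Λ → H) (hH : IsVRKHS K H J kf) (ξ : X → Λ) :
    J (∑ x, kf x (ξ x)) = fun y => ∑ x, K x y (ξ x) := by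
  rw [map_sum]
  funext y
  simp [hH.kfun_eq]

/-- On a finite input space X, a uniform coercivity bound
Σ (K(x,y)ξ(x),ξ(y)) ≥ λ Σ ‖ξ(x)‖² (λ > 0) implies H_K = Λ^X (no nontrivial refinement);
conversely, H_K = Λ^X implies strict positive-definiteness of K; and if Λ is
finite-dimensional these are equivalent. -/
theorem stmt19 {X Λ : Type*} [Fintype X]
    [NormedAddCommGroup Λ] [InnerProductSpace ℂ Λ] [CompleteSpace Λ]
    (K : X → X → Λ →L[ℂ] Λ) (hK : IsOpKernel K)
    {H : Type*} [NormedAddCommGroup H] [InnerProductSpace ℂ H] [CompleteSpace H]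
    (J : H →ₗ[ℂ] (X → Λ)) (kf : X → Λ → H) (hH : IsVRKHS K H J kf) :
    ((∃ lam : ℝ, 0 < lam ∧ ∀ ξ : X → Λ,
        ((lam * ∑ x, ‖ξ x‖ ^ 2 : ℝ) : ℂ) ≤ ∑ x, ∑ y, ⟪ξ y, K x y (ξ x)⟫) →
      Function.Surjective ⇑J) ∧
    (Function.Surjective ⇑J →
      ∀ ξ : X → Λ, ξ ≠ 0 → (0 : ℂ) < ∑ x, ∑ y, ⟪ξ y, K x y (ξ x)⟫) ∧
    (FiniteDimensional ℂ Λ →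
      (Function.Surjective ⇑J ↔
        ∀ ξ : X → Λ, ξ ≠ 0 → (0 : ℂ) < ∑ x, ∑ y, ⟪ξ y, K x y (ξ x)⟫)) := by
  have h2 : Function.Surjective ⇑J →
      ∀ ξ : X → Λ, ξ ≠ 0 → (0 : ℂ) < ∑ x, ∑ y, ⟪ξ y, K x y (ξ x)⟫ := by
    intro hs ξ hξ
    rw [stmt19_quad K J kf hH]
    obtain ⟨f, hf⟩ := hs ξ
    have hu : (∑ x, kf x (ξ x)) ≠ 0 := by
      intro h0
      apply hξ
      have h1 : ⟪∑ x, kf x (ξ x), f⟫ = 0 := by rw [h0, inner_zero_left]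
      rw [sum_inner] at h1
      simp only [hH.repro, hf, inner_self_eq_norm_sq_to_K] at h1
      have h3 : ∑ x, ‖ξ x‖ ^ 2 = 0 := by
        have h4 : ((∑ x, ‖ξ x‖ ^ 2 : ℝ) : ℂ) = 0 := by
          rw [← h1]; push_cast; rfl
        exact_mod_cast h4
      rw [Finset.sum_eq_zero_iff_of_nonneg (fun _ _ => by positivity)] at h3
      funext x
      simpa using h3 x (Finset.mem_univ x)
    have hp : 0 < ‖∑ x, kf x (ξ x)‖ ^ 2 := by
      have := norm_pos_iff.mpr hu
      positivity
    exact_mod_cast hp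
  refine ⟨?_, h2, fun hfd => ⟨h2, ?_⟩⟩
  · rintro ⟨lam, hl, hb⟩ g
    let T : PiLp 2 (fun _ : X => Λ) →L[ℂ] PiLp 2 (fun _ : X => Λ) :=
      ((PiLp.continuousLinearEquiv 2 ℂ (fun _ : X => Λ)).symm : (X → Λ) →L[ℂ] _) ∘L
        (ContinuousLinearMap.pi fun y => ∑ x, (K x y) ∘L (PiLp.proj 2 (fun _ : X => Λ) x))
    have hT : ∀ v y, T v y = ∑ x, K x y (v x) := by
      intro v y
      simp [T]
    have hU : IsUnit T := by
      refine ContinuousLinearMap.isUnit_of_forall_le_norm_inner_map T (c := ⟨lam, hl.le⟩)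
        hl fun v => ?_
      have e : ⟪v, T v⟫ = ∑ x, ∑ y, ⟪v y, K x y (v x)⟫ := by
        rw [PiLp.inner_apply, Finset.sum_comm]
        simp only [hT, inner_sum]
      rw [norm_inner_symm, e]
      have h := hb v
      rw [stmt19_quad K J kf hH] at h ⊢
      have h' : lam * ∑ x, ‖v x‖ ^ 2 ≤ ‖∑ x, kf x (v x)‖ ^ 2 := by exact_mod_cast h
      rw [PiLp.norm_sq_eq_of_L2, Complex.norm_real, Real.norm_of_nonneg (by positivity), mul_comm]
      exact h'
    have hS : Function.Surjective T := (ContinuousLinearMap.isUnit_iff_bijective.mp hU).2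
    obtain ⟨v, hv⟩ := hS (WithLp.toLp 2 g)
    refine ⟨∑ x, kf x (v x), ?_⟩
    rw [stmt19_J K J kf hH]
    funext y
    rw [← hT, hv]
  · intro hpos g
    let T : (X → Λ) →ₗ[ℂ] (X → Λ) :=
      LinearMap.pi fun y => ∑ x, (K x y : Λ →ₗ[ℂ] Λ) ∘ₗ (LinearMap.proj x)
    have hT : ∀ v, T v = J (∑ x, kf x (v x)) := by
      intro v
      rw [stmt19_J K J kf hH]
      funext y
      simp [T]
    have hI : Function.Injective T := by
      rw [injective_iff_map_eq_zero]
      intro v hv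
      by_contra hne
      have h := hpos v hne
      rw [hT] at hv
      have h0 := hH.inj (hv.trans (map_zero J).symm)
      rw [stmt19_quad K J kf hH, h0] at h
      simp at h
    obtain ⟨v, hv⟩ := LinearMap.injective_iff_surjective.mp hI g
    exact ⟨_, (hT v).symm.trans hv⟩
end
end
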